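/- arXiv:2209.07203 — 2 statements merged into one kernel-verified Lean document; each statement's English description precedes it below -/
import Mathlib

section
/- Let (S,[-,-,-]) be a semiheap, e ∈ S, and suppose the middle shift μ_{ee} : x ↦ [e,x,e] is surjective. Then μ_{ee} is a warp of S if and only if S is an abelian semiheap. -/
/-- The para-associative laws making a ternary operation a semiheap, as a predicate on the
operation; the third law `[a,[d,c,b],e] = [a,b,[c,d,e]]` follows by transitivity. -/
structure IsSemiheap {S : Type*} (t : S → S → S → S) : Prop where
  assoc_middle : ∀ a b c d e, t (t a b c) d e = t a (t d c b) e
  assoc_right : ∀ a b c d e, t (t a b c) d e = t a b (t c d e)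

/-- The middle shift `μ_{pq} : x ↦ [p,x,q]` of a ternary operation. -/
def middleShift {S : Type*} (t : S → S → S → S) (p q : S) : S → S :=
  fun x => t p x q

/-- A warp `η` of a ternary operation, `η [a, η b, c] = [η a, b, η c]`; no semiheap law is built
into the predicate. -/
def IsWarp {S : Type*} (t : S → S → S → S) (η : S → S) : Prop :=
  ∀ a b c, η (t a (η b) c) = t (η a) b (η c)

namespace IsSemiheap

variable {S : Type*} {t : S → S → S → S}

/-- For `p = q = r = s` this is the warp law with the outer arguments interchanged, which is why
being a warp amounts to a commutation law. -/
theorem middleShift_op_middleShift (ht : IsSemiheap t) (p q r s a b c : S) :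
    middleShift t p q (t a (middleShift t r s b) c) =
      t (middleShift t p r c) b (middleShift t s q a) :=
  calc
    t p (t a (t r b s) c) q = t (t p c (t r b s)) a q := (ht.assoc_middle ..).symm
    _ = t (t (t p c r) b s) a q := by rw [ht.assoc_right p c r b s]
    _ = t (t p c r) b (t s a q) := ht.assoc_right ..

theorem isWarp_middleShift_iff (ht : IsSemiheap t) (e : S) :
    IsWarp t (middleShift t e e) ↔
      ∀ a b c, t (middleShift t e e a) b (middleShift t e e c) =
        t (middleShift t e e c) b (middleShift t e e a) :=
  forall₃_congr fun a b c => by rw [ht.middleShift_op_middleShift, eq_comm]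

end IsSemiheap

/-- If the middle shift `μ_{ee}` of a semiheap `(S,t)` is surjective,
then `μ_{ee}` is a warp iff `S` is abelian. -/
theorem stmt_4 {S : Type*} (t : S → S → S → S)
    (h1 : ∀ a b c d e, t (t a b c) d e = t a (t d c b) e)
    (h2 : ∀ a b c d e, t (t a b c) d e = t a b (t c d e))
    (e : S)
    (hsurj : Function.Surjective (fun x => t e x e)) :
    (∀ a b c, t e (t a (t e b e) c) e = t (t e a e) b (t e c e))
    ↔ (∀ a b c, t a b c = t c b a) := by
  have ht : IsSemiheap t := ⟨h1, h2⟩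
  refine (ht.isWarp_middleShift_iff e).trans ⟨fun hcomm x b y => ?_, fun habel a b c => habel _ b _⟩
  obtain ⟨a, rfl⟩ := hsurj x
  obtain ⟨c, rfl⟩ := hsurj y
  exact hcomm a b c
end

section
/- Let (S,·) be a semigroup and φ : S → S a function. Suppose there exist l, r ∈ S such that the left multiplication map s ↦ l·s and the right multiplication map s ↦ s·r are both injective. Then the ternary operation [a,b,c]^φ := a · φ(b) · c makes S into a semiheap if and only if φ is a switch. -/
/-- A semiheap operation: a ternary operation `t a b c = [a,b,c]` satisfying
`[[a,b,c],d,e] = [a,[d,c,b],e] = [a,b,[c,d,e]]`. -/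
def IsSemiheap_s7 {S : Type*} (t : S → S → S → S) : Prop :=
  (∀ a b c d e : S, t (t a b c) d e = t a (t d c b) e) ∧
    (∀ a b c d e : S, t (t a b c) d e = t a b (t c d e))

section Semigroup

variable {S : Type*} [Semigroup S] {φ : S → S}

/-- The ternary operation `[a,b,c]^φ` that a self-map `φ` induces on a semigroup. -/
def twistedTriple (φ : S → S) (a b c : S) : S := a * φ b * c

/-- A switch of a semigroup: a self-map that reverses products of the form `a * φ b * c`, so that
`twistedTriple φ` becomes a semiheap operation. -/
def IsSwitch (φ : S → S) : Prop :=
  ∀ a b c : S, φ (a * φ b * c) = φ c * b * φ a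

theorem twistedTriple_assoc (a b c d e : S) :
    twistedTriple φ (twistedTriple φ a b c) d e = twistedTriple φ a b (twistedTriple φ c d e) := by
  simp only [twistedTriple, mul_assoc]

theorem twistedTriple_twistedTriple_left (a b c d e : S) :
    twistedTriple φ (twistedTriple φ a b c) d e = a * (φ b * c * φ d) * e := by
  simp only [twistedTriple, mul_assoc]

theorem isSemiheap_twistedTriple_iff :
    IsSemiheap_s7 (twistedTriple φ) ↔
      ∀ a b c x y : S, x * φ (a * φ b * c) * y = x * (φ c * b * φ a) * y := by
  constructor
  · rintro ⟨para_assoc, -⟩ a b c x y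
    exact (para_assoc x c b a y).symm.trans (twistedTriple_twistedTriple_left x c b a y)
  · intro h
    refine ⟨fun a b c d e => ?_, twistedTriple_assoc⟩
    exact (twistedTriple_twistedTriple_left a b c d e).trans (h d c b a e).symm

theorem injective_mul_mul_of_injective_mul {l r : S}
    (hl : Function.Injective (fun s => l * s)) (hr : Function.Injective (fun s => s * r)) :
    Function.Injective (fun s x y : S => x * s * y) :=
  fun _ _ h => hl (hr (congrFun₂ h l r))

theorem stmt_7_general (φ : S → S) (hS : Function.Injective (fun s x y : S => x * s * y)) :
    IsSemiheap_s7 (twistedTriple φ) ↔ IsSwitch φ := by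
  rw [isSemiheap_twistedTriple_iff]
  constructor
  · intro h a b c
    exact hS (funext₂ (h a b c))
  · intro h a b c x y
    rw [h]

end Semigroup

/-- If a semigroup has an injective left multiplication `l * -` and an
injective right multiplication `- * r`, then `[a,b,c]^φ := a * φ b * c` is a semiheap
operation iff `φ` is a switch. -/
theorem stmt_7 {S : Type*} [Semigroup S] (φ : S → S) (l r : S)
    (hl : Function.Injective (fun s => l * s))
    (hr : Function.Injective (fun s => s * r)) :
    ((∀ a b c d e : S, (a * φ b * c) * φ d * e = a * φ (d * φ c * b) * e) ∧
     (∀ a b c d e : S, (a * φ b * c) * φ d * e = a * φ b * (c * φ d * e)))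
    ↔ (∀ a b c : S, φ (a * φ b * c) = φ c * b * φ a) :=
  stmt_7_general φ (injective_mul_mul_of_injective_mul hl hr)
end
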